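/- Let ψ be a non-leaking tripartite embedding of a probability mass function P on a finite set 𝒳×𝒴. Then there exist unitaries U on the A-register and V on the B-register of the form U|x⟩_A = |f_X(x)⟩_Ã ⊗ |μ_x⟩_{Ã⊥} and V|y⟩_B = |f_Y(y)⟩_B̃ ⊗ |ν_y⟩_{B̃⊥} (with unit vectors μ_x mutually orthogonal whenever x ≠ x' and f_X(x) = f_X(x'), and similarly for ν_y) such that: the state obtained from tr_{EA'}|ψ⟩⟨ψ| by measuring register A in the computational basis (yielding outcome X) and applying V to register B equals Σ_{x,ỹ} P_{X,Y↘X}(x,ỹ) |x⟩⟨x|_X ⊗ |ỹ⟩⟨ỹ|_B̃ ⊗ σ^{ỹ}_{B̃⊥B'} for some density matrices σ^{ỹ} depending only on ỹ; and symmetrically, the state obtained from tr_{EB'}|ψ⟩⟨ψ| by measuring register B (yielding Y) and applying U to register A equals Σ_{x̃,y} P_{X↘Y,Y}(x̃,y) |x̃⟩⟨x̃|_Ã ⊗ |y⟩⟨y|_Y ⊗ τ^{x̃}_{Ã⊥A'} for density matrices τ^{x̃} depending only on x̃. -/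

import Mathlib

open scoped BigOperators
open Matrix
open scoped ComplexOrder

attribute [local instance 10] Classical.propDecidable

noncomputable section

/-- Base-2 Shannon entropy of a finitely supported real function. -/
def shannonEntropy {α : Type*} [Fintype α] (p : α → ℝ) : ℝ :=
  -∑ x, p x * Real.logb 2 (p x)

/-- Von Neumann entropy: base-2 Shannon entropy of the eigenvalue multiset. -/
def vonNeumannEntropy {n : Type*} [Fintype n] [DecidableEq n] (ρ : Matrix n n ℂ) : ℝ :=
  if h : ρ.IsHermitian then shannonEntropy h.eigenvalues else 0

def IsDensityMatrix {n : Type*} [Fintype n] [DecidableEq n] (ρ : Matrix n n ℂ) : Prop :=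
  ρ.PosSemidef ∧ ρ.trace = 1

variable {𝒳 𝒴 : Type*} [Fintype 𝒳] [Fintype 𝒴] [DecidableEq 𝒳] [DecidableEq 𝒴]

def margX (P : 𝒳 × 𝒴 → ℝ) (x : 𝒳) : ℝ := ∑ y, P (x, y)

def margY (P : 𝒳 × 𝒴 → ℝ) (y : 𝒴) : ℝ := ∑ x, P (x, y)

/-- Classical base-2 mutual information `I(X;Y) = H(X) + H(Y) − H(X,Y)`. -/
def mutualInfo (P : 𝒳 × 𝒴 → ℝ) : ℝ :=
  shannonEntropy (margX P) + shannonEntropy (margY P) - shannonEntropy P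

/-- `f_X(x) = P_{Y|X=x}`: the dependent-part map of `X` w.r.t. `Y` (`X↘Y = f_X(X)`). -/
def condYX (P : 𝒳 × 𝒴 → ℝ) (x : 𝒳) : 𝒴 → ℝ := fun y => P (x, y) / margX P x

/-- `f_Y(y) = P_{X|Y=y}`: the dependent-part map of `Y` w.r.t. `X` (`Y↘X = f_Y(Y)`). -/
def condXY (P : 𝒳 × 𝒴 → ℝ) (y : 𝒴) : 𝒳 → ℝ := fun x => P (x, y) / margY P y

section tripartite

variable {dE dA dB : ℕ}

/-- The ccq-state on `X Y B'` (`X`, `Y` measured; `E`, `A'` traced out) of the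
tripartite state `ψ ∈ ℂ^{E} ⊗ ℂ^𝒳 ⊗ ℂ^𝒴 ⊗ ℂ^{A'} ⊗ ℂ^{B'}`. -/
def triXYBp (ψ : Fin dE × 𝒳 × 𝒴 × Fin dA × Fin dB → ℂ) :
    Matrix (Fin dB × (𝒳 × 𝒴)) (Fin dB × (𝒳 × 𝒴)) ℂ :=
  Matrix.blockDiagonal fun p : 𝒳 × 𝒴 => fun b b' =>
    ∑ e, ∑ a, ψ (e, p.1, p.2, a, b) * (starRingEnd ℂ) (ψ (e, p.1, p.2, a, b'))

/-- The cq-state on `Y B'`. -/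
def triYBp (ψ : Fin dE × 𝒳 × 𝒴 × Fin dA × Fin dB → ℂ) :
    Matrix (Fin dB × 𝒴) (Fin dB × 𝒴) ℂ :=
  Matrix.blockDiagonal fun y : 𝒴 => fun b b' =>
    ∑ e, ∑ x, ∑ a, ψ (e, x, y, a, b) * (starRingEnd ℂ) (ψ (e, x, y, a, b'))

/-- The ccq-state on `X A' Y` (`X`, `Y` measured; `E`, `B'` traced out). -/
def triXYAp (ψ : Fin dE × 𝒳 × 𝒴 × Fin dA × Fin dB → ℂ) :
    Matrix (Fin dA × (𝒳 × 𝒴)) (Fin dA × (𝒳 × 𝒴)) ℂ :=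
  Matrix.blockDiagonal fun p : 𝒳 × 𝒴 => fun a a' =>
    ∑ e, ∑ b, ψ (e, p.1, p.2, a, b) * (starRingEnd ℂ) (ψ (e, p.1, p.2, a', b))

/-- The cq-state on `X A'`. -/
def triXAp (ψ : Fin dE × 𝒳 × 𝒴 × Fin dA × Fin dB → ℂ) :
    Matrix (Fin dA × 𝒳) (Fin dA × 𝒳) ℂ :=
  Matrix.blockDiagonal fun x : 𝒳 => fun a a' =>
    ∑ e, ∑ y, ∑ b, ψ (e, x, y, a, b) * (starRingEnd ℂ) (ψ (e, x, y, a', b))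

/-- `S(X;YB') = H(X) + S(YB') − S(XYB')`, with `X` and `Y` measured. -/
def StriXYBp (P : 𝒳 × 𝒴 → ℝ) (ψ : Fin dE × 𝒳 × 𝒴 × Fin dA × Fin dB → ℂ) : ℝ :=
  shannonEntropy (margX P) + vonNeumannEntropy (triYBp ψ) - vonNeumannEntropy (triXYBp ψ)

/-- `S(XA';Y) = S(XA') + H(Y) − S(XA'Y)`, with `X` and `Y` measured. -/
def StriXApY (P : 𝒳 × 𝒴 → ℝ) (ψ : Fin dE × 𝒳 × 𝒴 × Fin dA × Fin dB → ℂ) : ℝ :=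
  vonNeumannEntropy (triXAp ψ) + shannonEntropy (margY P) - vonNeumannEntropy (triXYAp ψ)

/-- The cq-state on `X B B'` (only `A` measured; `E`, `A'` traced out). -/
def triXBB (ψ : Fin dE × 𝒳 × 𝒴 × Fin dA × Fin dB → ℂ) :
    Matrix ((𝒴 × Fin dB) × 𝒳) ((𝒴 × Fin dB) × 𝒳) ℂ :=
  Matrix.blockDiagonal fun x : 𝒳 => fun p q =>
    ∑ e, ∑ a, ψ (e, x, p.1, a, p.2) * (starRingEnd ℂ) (ψ (e, x, q.1, a, q.2))

/-- The reduced state on `B B'`. -/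
def triBB (ψ : Fin dE × 𝒳 × 𝒴 × Fin dA × Fin dB → ℂ) :
    Matrix (𝒴 × Fin dB) (𝒴 × Fin dB) ℂ := fun p q =>
  ∑ e, ∑ x, ∑ a, ψ (e, x, p.1, a, p.2) * (starRingEnd ℂ) (ψ (e, x, q.1, a, q.2))

/-- `S(X;BB') = H(X) + S(BB') − S(XBB')`. -/
def StriXBB (P : 𝒳 × 𝒴 → ℝ) (ψ : Fin dE × 𝒳 × 𝒴 × Fin dA × Fin dB → ℂ) : ℝ :=
  shannonEntropy (margX P) + vonNeumannEntropy (triBB ψ) - vonNeumannEntropy (triXBB ψ)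

/-- The cq-state on `A A' Y` (only `B` measured; `E`, `B'` traced out). -/
def triYAA (ψ : Fin dE × 𝒳 × 𝒴 × Fin dA × Fin dB → ℂ) :
    Matrix ((𝒳 × Fin dA) × 𝒴) ((𝒳 × Fin dA) × 𝒴) ℂ :=
  Matrix.blockDiagonal fun y : 𝒴 => fun p q =>
    ∑ e, ∑ b, ψ (e, p.1, y, p.2, b) * (starRingEnd ℂ) (ψ (e, q.1, y, q.2, b))

/-- The reduced state on `A A'`. -/
def triAA (ψ : Fin dE × 𝒳 × 𝒴 × Fin dA × Fin dB → ℂ) :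
    Matrix (𝒳 × Fin dA) (𝒳 × Fin dA) ℂ := fun p q =>
  ∑ e, ∑ y, ∑ b, ψ (e, p.1, y, p.2, b) * (starRingEnd ℂ) (ψ (e, q.1, y, q.2, b))

/-- `S(AA';Y) = S(AA') + H(Y) − S(AA'Y)`. -/
def StriAAY (P : 𝒳 × 𝒴 → ℝ) (ψ : Fin dE × 𝒳 × 𝒴 × Fin dA × Fin dB → ℂ) : ℝ :=
  vonNeumannEntropy (triAA ψ) + shannonEntropy (margY P) - vonNeumannEntropy (triYAA ψ)

end tripartite

/-!
Fix Bob's side and let `Γ x` be the unnormalised state of `BB'` given `X = x`, with sum `ρ`. In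
terms of relative entropies, `S(X;BB') = I(X;Y)` says that, summed over `x`, measuring `B` does not
decrease `D(Γ x ‖ ρ)`; as it never increases any of these, each of them is preserved.

For positive semidefinite `A`, `B` and `t > 0`, the form
`K ↦ 2 Re tr (Kᴴ A) - tr (Kᴴ B K) - t tr (K A Kᴴ)` is maximised exactly at the solutions of
`B K + t K A = A`, by completing the square. Its maximum is `∑ w α d/dt log (β + t α)`, where `w` is
the overlap of the eigenvectors for the eigenvalues `α` of `A` and `β` of `B`; so its integral over
`t > 0` is `D(A ‖ B)` up to a divergent term that depends only on `tr A`. On the diagonal matrices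
`K` that depend only on the measurement outcome the maximum is the corresponding quantity for the
outcome distributions. This gives monotonicity under the measurement, and in the equality case it
shows that `K = diag (a / (b + t a))` solves `B K + t K A = A` for every `t > 0`, where `a` and `b`
are the outcome weights of `A` and `B`.

Letting `t → 0` yields `A = B diag (a / b)`, that is, `Γ x = ρ · P(x|y)`. Since both `Γ x` and `ρ`
are Hermitian, `ρ` commutes with every `diag (P(x|y))`, hence is block diagonal for the partition of
`𝒴` into the fibres of `f_Y`, and on each block `Γ x` is a multiple of `ρ`.
-/

section ScalarComparison

variable {ι κ : Type*} [Fintype ι] [Fintype κ] {c u v : ι → ℝ} {c' u' v' : κ → ℝ}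

lemma hasDerivAt_sum_mul_log_add_mul (h : ∀ k, c k ≠ 0 → 0 < u k ∧ 0 < v k) {t : ℝ}
    (ht : 0 ≤ t) :
    HasDerivAt (fun t => ∑ k, c k * Real.log (u k + t * v k))
      (∑ k, c k * (v k / (u k + t * v k))) t := by
  refine HasDerivAt.fun_sum fun k _ => ?_
  by_cases hk : c k = 0
  · simpa [hk] using hasDerivAt_const t (0 : ℝ)
  · obtain ⟨hu, hv⟩ := h k hk
    have hne : u k + t * v k ≠ 0 := by positivity
    simpa using (((hasDerivAt_mul_const (v k)).const_add (u k)).log hne).const_mul (c k)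

lemma tendsto_sum_mul_log_add_mul_sub_log (h : ∀ k, c k ≠ 0 → 0 < u k ∧ 0 < v k) :
    Filter.Tendsto (fun t => ∑ k, c k * Real.log (u k + t * v k) - (∑ k, c k) * Real.log t)
      Filter.atTop (nhds (∑ k, c k * Real.log (v k))) := by
  simp only [Finset.sum_mul, ← Finset.sum_sub_distrib, ← mul_sub]
  refine tendsto_finsetSum _ fun k _ => ?_
  by_cases hk : c k = 0
  · simp [hk]
  obtain ⟨hu, hv⟩ := h k hk
  refine Filter.Tendsto.const_mul _ ?_
  have hlim := (Real.tendsto_log_comp_add_sub_log (u k / v k)).const_add (Real.log (v k))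
  rw [add_zero] at hlim
  refine hlim.congr' ?_
  filter_upwards [Filter.eventually_gt_atTop 0] with t ht
  have hsplit : u k + t * v k = v k * (t + u k / v k) := by field_simp; ring
  rw [hsplit, Real.log_mul hv.ne' (by positivity), add_sub_assoc]

variable (hc : ∑ k, c' k = ∑ k, c k) (h : ∀ k, c k ≠ 0 → 0 < u k ∧ 0 < v k)
  (h' : ∀ k, c' k ≠ 0 → 0 < u' k ∧ 0 < v' k)
  (hF : ∀ t > 0, ∑ k, c' k * (v' k / (u' k + t * v' k)) ≤ ∑ k, c k * (v k / (u k + t * v k)))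

include h h' hF in
lemma monotoneOn_sum_mul_log_sub :
    MonotoneOn (fun t => ∑ k, c k * Real.log (u k + t * v k) -
      ∑ k, c' k * Real.log (u' k + t * v' k)) (Set.Ici 0) := by
  have hderiv : ∀ t : ℝ, 0 ≤ t → HasDerivAt _ _ t := fun t ht =>
    (hasDerivAt_sum_mul_log_add_mul h ht).sub (hasDerivAt_sum_mul_log_add_mul h' ht)
  refine monotoneOn_of_hasDerivWithinAt_nonneg (convex_Ici 0)
    (fun t ht => (hderiv t ht).continuousAt.continuousWithinAt)
    (fun t ht => (hderiv t (interior_subset ht)).hasDerivWithinAt) fun t ht => ?_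
  rw [interior_Ici] at ht
  exact sub_nonneg.mpr (hF t ht)

include hc h h' hF

lemma sum_mul_log_add_sub_le {t : ℝ} (ht : 0 ≤ t) :
    ∑ k, c k * Real.log (u k + t * v k) - ∑ k, c' k * Real.log (u' k + t * v' k) ≤
      ∑ k, c k * Real.log (v k) - ∑ k, c' k * Real.log (v' k) := by
  have hlim := (tendsto_sum_mul_log_add_mul_sub_log h).sub (tendsto_sum_mul_log_add_mul_sub_log h')
  simp only [hc, sub_sub_sub_cancel_right] at hlim
  refine ge_of_tendsto hlim ?_
  filter_upwards [Filter.eventually_ge_atTop t] with s hs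
  exact monotoneOn_sum_mul_log_sub h h' hF ht (ht.trans hs) hs

theorem sum_mul_log_sub_log_le :
    ∑ k, c' k * (Real.log (v' k) - Real.log (u' k)) ≤
      ∑ k, c k * (Real.log (v k) - Real.log (u k)) := by
  have hle := sum_mul_log_add_sub_le hc h h' hF le_rfl
  simp only [zero_mul, add_zero] at hle
  simp only [mul_sub, Finset.sum_sub_distrib]
  linarith

theorem sum_mul_div_eq_of_sum_mul_log_sub_log_eq
    (heq : ∑ k, c' k * (Real.log (v' k) - Real.log (u' k)) =
      ∑ k, c k * (Real.log (v k) - Real.log (u k))) {t : ℝ} (ht : 0 < t) :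
    ∑ k, c' k * (v' k / (u' k + t * v' k)) = ∑ k, c k * (v k / (u k + t * v k)) := by
  have hconst : (fun t => ∑ k, c k * Real.log (u k + t * v k) -
      ∑ k, c' k * Real.log (u' k + t * v' k)) =ᶠ[nhds t]
        fun _ => ∑ k, c k * Real.log (v k) - ∑ k, c' k * Real.log (v' k) := by
    filter_upwards [lt_mem_nhds ht] with s hs
    refine le_antisymm (sum_mul_log_add_sub_le hc h h' hF hs.le) ?_
    have hmono := monotoneOn_sum_mul_log_sub h h' hF Set.self_mem_Ici hs.le hs.le
    simp only [zero_mul, add_zero] at hmono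
    simp only [mul_sub, Finset.sum_sub_distrib] at heq
    linarith
  have hderiv := (hasDerivAt_sum_mul_log_add_mul h ht.le).sub
    (hasDerivAt_sum_mul_log_add_mul h' ht.le)
  have hzero := (hderiv.congr_of_eventuallyEq hconst.symm).unique (hasDerivAt_const t _)
  linarith

end ScalarComparison

section Entropy

lemma shannonEntropy_eq {α : Type*} [Fintype α] (p : α → ℝ) :
    shannonEntropy p = -(∑ x, p x * Real.log (p x)) / Real.log 2 := by
  simp only [shannonEntropy, Real.logb, mul_div_assoc', Finset.sum_div, neg_div]

lemma shannonEntropy_comp_equiv {α β : Type*} [Fintype α] [Fintype β] (e : α ≃ β)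
    (p : β → ℝ) : shannonEntropy (p ∘ e) = shannonEntropy p :=
  congrArg Neg.neg (Equiv.sum_comp e fun b => p b * Real.logb 2 (p b))

variable {n o : Type*} [Fintype n] [DecidableEq n] [Fintype o] [DecidableEq o]

lemma charpoly_blockDiagonal {R : Type*} [CommRing R] (M : o → Matrix n n R) :
    (blockDiagonal M).charpoly = ∏ k, (M k).charpoly := by
  have hmat : (blockDiagonal M).charmatrix = blockDiagonal fun k => (M k).charmatrix := by
    ext ⟨i, k⟩ ⟨j, l⟩
    by_cases hkl : k = l
    · subst hkl
      simp [charmatrix_apply, blockDiagonal_apply, diagonal_apply]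
    · simp [blockDiagonal_apply, hkl]
  simp only [Matrix.charpoly, hmat, det_blockDiagonal]

lemma vonNeumannEntropy_eq_sum_roots {ρ : Matrix n n ℂ} (h : ρ.IsHermitian) :
    vonNeumannEntropy ρ = -(ρ.charpoly.roots.map fun z => z.re * Real.logb 2 z.re).sum := by
  rw [vonNeumannEntropy, dif_pos h, h.roots_charpoly_eq_eigenvalues, shannonEntropy]
  simp

lemma vonNeumannEntropy_blockDiagonal {M : o → Matrix n n ℂ} (hM : ∀ k, (M k).IsHermitian) :
    vonNeumannEntropy (blockDiagonal M) = ∑ k, vonNeumannEntropy (M k) := by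
  have h : (blockDiagonal M).IsHermitian := by
    rw [IsHermitian, blockDiagonal_conjTranspose]
    exact congrArg _ (funext hM)
  rw [vonNeumannEntropy_eq_sum_roots h, charpoly_blockDiagonal, Polynomial.roots_prod _ _
    (Finset.prod_ne_zero_iff.mpr fun k _ => (charpoly_monic (M k)).ne_zero), Multiset.map_bind,
    Multiset.sum_bind]
  simp only [vonNeumannEntropy_eq_sum_roots (hM _), Finset.sum_neg_distrib]
  rfl

end Entropy

section JointSpectrum

variable {n : Type*} [Fintype n] [DecidableEq n] {A B : Matrix n n ℂ}

/-- The change-of-basis matrix `D j i = ⟨w_j, u_i⟩` from the eigenbasis `u` of `A` to the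
eigenbasis `w` of `B`. -/
def eigenbasisChange (hA : A.IsHermitian) (hB : B.IsHermitian) : Matrix n n ℂ :=
  star (hB.eigenvectorUnitary : Matrix n n ℂ) * (hA.eigenvectorUnitary : Matrix n n ℂ)

/-- The Nussbaum–Szkoła weights `|⟨w_j, u_i⟩|²` of two Hermitian matrices, indexed by pairs
`(i, j)`: they turn traces of products of functions of `A` and `B` into classical sums. -/
def eigenOverlap (hA : A.IsHermitian) (hB : B.IsHermitian) (p : n × n) : ℝ :=
  Complex.normSq (eigenbasisChange hA hB p.2 p.1)

variable (hA : A.IsHermitian) (hB : B.IsHermitian)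

include hA in
lemma cfc_eq_eigenvectorUnitary_mul (f : ℝ → ℝ) :
    cfc f A = hA.eigenvectorUnitary * diagonal (fun i => (f (hA.eigenvalues i) : ℂ)) *
      star (hA.eigenvectorUnitary : Matrix n n ℂ) := by
  rw [hA.cfc_eq, IsHermitian.cfc, Unitary.conjStarAlgAut_apply]
  rfl

theorem re_trace_cfc_mul_cfc (f g : ℝ → ℝ) :
    (cfc f A * cfc g B).trace.re = ∑ p, eigenOverlap hA hB p *
      (f (hA.eigenvalues p.1) * g (hB.eigenvalues p.2)) := by
  have hcycle : (cfc f A * cfc g B).trace =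
      (eigenbasisChange hA hB * diagonal (fun i => (f (hA.eigenvalues i) : ℂ)) *
        (star (eigenbasisChange hA hB) *
          diagonal (fun j => (g (hB.eigenvalues j) : ℂ)))).trace := by
    rw [cfc_eq_eigenvectorUnitary_mul hA, cfc_eq_eigenvectorUnitary_mul hB, eigenbasisChange,
      star_mul, star_star, ← Matrix.mul_assoc, trace_mul_comm]
    simp only [Matrix.mul_assoc]
  rw [hcycle, Fintype.sum_prod_type_right]
  simp only [trace, diag_apply, Matrix.mul_apply (M := _ * diagonal _), mul_diagonal, star_apply,
    Complex.re_sum, eigenOverlap]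
  refine Finset.sum_congr rfl fun j _ => Finset.sum_congr rfl fun i _ => ?_
  rw [Complex.star_def, mul_mul_mul_comm, Complex.mul_conj, ← Complex.ofReal_mul,
    ← Complex.ofReal_mul, Complex.ofReal_re]

include hB in
lemma re_trace_mul_cfc (f : ℝ → ℝ) :
    (A * cfc f B).trace.re = ∑ p, eigenOverlap hA hB p * hA.eigenvalues p.1 *
      f (hB.eigenvalues p.2) := by
  conv_lhs => rw [← cfc_id' ℝ A hA.isSelfAdjoint]
  simp only [re_trace_cfc_mul_cfc hA hB, mul_assoc]

include hB in
lemma re_trace_cfc (f : ℝ → ℝ) :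
    (cfc f A).trace.re = ∑ p, eigenOverlap hA hB p * f (hA.eigenvalues p.1) := by
  simpa [cfc_const_one ℝ B hB.isSelfAdjoint] using re_trace_cfc_mul_cfc hA hB f fun _ => 1

include hB in
lemma re_trace_eq_sum_eigenOverlap :
    A.trace.re = ∑ p, eigenOverlap hA hB p * hA.eigenvalues p.1 := by
  conv_lhs => rw [← cfc_id' ℝ A hA.isSelfAdjoint, re_trace_cfc hA hB]

include hA in
lemma mul_eigenvectorUnitary :
    A * hA.eigenvectorUnitary =
      hA.eigenvectorUnitary * diagonal (fun i => (hA.eigenvalues i : ℂ)) := by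
  conv_lhs => lhs; rw [← cfc_id' ℝ A hA.isSelfAdjoint, cfc_eq_eigenvectorUnitary_mul hA]
  rw [Matrix.mul_assoc, Unitary.coe_star_mul_self, Matrix.mul_one]

lemma pos_of_eigenOverlap_mul_ne_zero (hA : A.PosSemidef) (hB : B.PosSemidef)
    (hker : ∀ v, B *ᵥ v = 0 → A *ᵥ v = 0) {p : n × n}
    (hp : eigenOverlap hA.1 hB.1 p * hA.1.eigenvalues p.1 ≠ 0) :
    0 < hB.1.eigenvalues p.2 ∧ 0 < hA.1.eigenvalues p.1 := by
  refine ⟨(hB.eigenvalues_nonneg _).lt_of_ne' fun hβ => hp ?_,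
    (hA.eigenvalues_nonneg _).lt_of_ne' (right_ne_zero_of_mul hp)⟩
  have hcol (k : n) : (A * (hB.1.eigenvectorUnitary : Matrix n n ℂ)) k p.2 = 0 := by
    refine congrFun (hker (hB.1.eigenvectorBasis p.2).ofLp ?_) k
    rw [hB.1.mulVec_eigenvectorBasis, hβ, zero_smul]
  have hentry : (eigenbasisChange hA.1 hB.1 *
      diagonal (fun i => (hA.1.eigenvalues i : ℂ))) p.2 p.1 = 0 := by
    rw [eigenbasisChange, Matrix.mul_assoc, ← mul_eigenvectorUnitary, ← Matrix.mul_assoc]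
    nth_rw 1 [← hA.1.isSelfAdjoint.star_eq]
    rw [← star_mul, Matrix.mul_apply]
    exact Finset.sum_eq_zero fun k _ => by rw [star_apply, hcol, star_zero, zero_mul]
  rw [mul_diagonal, mul_eq_zero, Complex.ofReal_eq_zero] at hentry
  exact hentry.elim (fun h => by simp [eigenOverlap, h]) fun h => by simp [h]

end JointSpectrum

section RelativeEntropy

variable {n : Type*} [Fintype n] [DecidableEq n] {A B : Matrix n n ℂ}

/-- Umegaki relative entropy `tr A (log A - log B)`, in nats. As `Real.log 0 = 0`, this is the
usual quantity only when the support of `A` is contained in that of `B`. -/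
def quantumRelEntropy (A B : Matrix n n ℂ) : ℝ :=
  (A * (cfc Real.log A - cfc Real.log B)).trace.re

lemma mul_cfc_log (hA : A.IsHermitian) :
    A * cfc Real.log A = cfc (fun x => x * Real.log x) A := by
  have hcont (f : ℝ → ℝ) : ContinuousOn f (spectrum ℝ A) := A.finite_real_spectrum.continuousOn f
  rw [cfc_mul _ _ A (hcont _) (hcont _), cfc_id' ℝ A hA.isSelfAdjoint]

lemma vonNeumannEntropy_eq_re_trace (hA : A.IsHermitian) :
    vonNeumannEntropy A = -(A * cfc Real.log A).trace.re / Real.log 2 := by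
  rw [mul_cfc_log hA, cfc_eq_eigenvectorUnitary_mul hA, trace_mul_cycle]
  simp [vonNeumannEntropy, hA, shannonEntropy_eq, trace_diagonal]

theorem quantumRelEntropy_eq_sum (hA : A.IsHermitian) (hB : B.IsHermitian) :
    quantumRelEntropy A B = ∑ p, eigenOverlap hA hB p * hA.eigenvalues p.1 *
      (Real.log (hA.eigenvalues p.1) - Real.log (hB.eigenvalues p.2)) := by
  rw [quantumRelEntropy, Matrix.mul_sub, trace_sub, Complex.sub_re, mul_cfc_log hA,
    re_trace_cfc hA hB, re_trace_mul_cfc hA hB, ← Finset.sum_sub_distrib]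
  exact Finset.sum_congr rfl fun p _ => by ring

end RelativeEntropy

section ResolventForm

variable {n : Type*} [Fintype n] {A B K K₀ : Matrix n n ℂ} {t : ℝ}

/-- The concave quadratic form whose maximisers are the solutions of the Sylvester equation
`B * K + t • (K * A) = A`. -/
def resolventForm (A B : Matrix n n ℂ) (t : ℝ) (K : Matrix n n ℂ) : ℝ :=
  2 * (Kᴴ * A).trace.re - (Kᴴ * B * K).trace.re - t * (K * A * Kᴴ).trace.re

theorem resolventForm_add_square (hA : A.IsHermitian) (hB : B.IsHermitian)
    (hK₀ : B * K₀ + (t : ℂ) • (K₀ * A) = A) :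
    resolventForm A B t K + (((K - K₀)ᴴ * B * (K - K₀)).trace.re +
      t * ((K - K₀) * A * (K - K₀)ᴴ).trace.re) = (K₀ᴴ * A).trace.re := by
  have hpair (M : Matrix n n ℂ) :
      (Mᴴ * A).trace.re = (Mᴴ * B * K₀).trace.re + t * (K₀ * A * Mᴴ).trace.re := by
    conv_lhs => rw [← hK₀]
    rw [trace_mul_comm (K₀ * A), Matrix.mul_add, Matrix.mul_smul, trace_add, trace_smul,
      Matrix.mul_assoc, Complex.add_re, smul_eq_mul, Complex.re_ofReal_mul]
  have hre (M : Matrix n n ℂ) : Mᴴ.trace.re = M.trace.re := by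
    rw [trace_conjTranspose, Complex.star_def, Complex.conj_re]
  have hBsymm : (K₀ᴴ * B * K).trace.re = (Kᴴ * B * K₀).trace.re := by
    rw [← hre, conjTranspose_mul, conjTranspose_mul, conjTranspose_conjTranspose, hB.eq,
      Matrix.mul_assoc]
  have hAsymm : (K * A * K₀ᴴ).trace.re = (K₀ * A * Kᴴ).trace.re := by
    rw [← hre, conjTranspose_mul, conjTranspose_mul, conjTranspose_conjTranspose, hA.eq,
      Matrix.mul_assoc]
  simp only [resolventForm, conjTranspose_sub, Matrix.sub_mul, Matrix.mul_sub, trace_sub,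
    Complex.sub_re, hBsymm, hAsymm]
  linear_combination 2 * hpair K - hpair K₀

theorem resolventForm_le_of_sylvester (hA : A.PosSemidef) (hB : B.PosSemidef) (ht : 0 < t)
    (hK₀ : B * K₀ + (t : ℂ) • (K₀ * A) = A) (K : Matrix n n ℂ) :
    resolventForm A B t K ≤ (K₀ᴴ * A).trace.re := by
  rw [← resolventForm_add_square (K := K) hA.1 hB.1 hK₀]
  have hBnonneg := (Complex.nonneg_iff.mp (hB.conjTranspose_mul_mul_same (K - K₀)).trace_nonneg).1
  have hAnonneg := (Complex.nonneg_iff.mp (hA.mul_mul_conjTranspose_same (K - K₀)).trace_nonneg).1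
  exact le_add_of_nonneg_right (add_nonneg hBnonneg (mul_nonneg ht.le hAnonneg))

open scoped MatrixOrder in
lemma mul_eq_zero_of_re_trace_conj_eq_zero {M : Matrix n n ℂ} (hM : M.PosSemidef)
    (h : (Kᴴ * M * K).trace.re = 0) : M * K = 0 := by
  classical
  have htr : (Kᴴ * M * K).trace = 0 := Complex.ext h
    (Complex.nonneg_iff.mp (hM.conjTranspose_mul_mul_same K).trace_nonneg).2.symm
  obtain ⟨S, rfl⟩ := CStarAlgebra.nonneg_iff_eq_star_mul_self.mp hM.nonneg
  have hSK : S * K = 0 := by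
    rw [← trace_conjTranspose_mul_self_eq_zero_iff, ← htr]
    simp only [conjTranspose_mul, star_eq_conjTranspose, Matrix.mul_assoc]
  rw [Matrix.mul_assoc, hSK, Matrix.mul_zero]

theorem sylvester_of_resolventForm_eq (hA : A.PosSemidef) (hB : B.PosSemidef) (ht : 0 < t)
    (hK₀ : B * K₀ + (t : ℂ) • (K₀ * A) = A)
    (hK : resolventForm A B t K = (K₀ᴴ * A).trace.re) :
    B * K + (t : ℂ) • (K * A) = A := by
  have hsq := resolventForm_add_square (K := K) hA.1 hB.1 hK₀
  have hBnonneg := (Complex.nonneg_iff.mp (hB.conjTranspose_mul_mul_same (K - K₀)).trace_nonneg).1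
  have hAnonneg := (Complex.nonneg_iff.mp (hA.mul_mul_conjTranspose_same (K - K₀)).trace_nonneg).1
  have hBzero : B * (K - K₀) = 0 :=
    mul_eq_zero_of_re_trace_conj_eq_zero hB (by linarith [mul_nonneg ht.le hAnonneg])
  have hAtrace : t * ((K - K₀) * A * (K - K₀)ᴴ).trace.re = 0 := by
    linarith [mul_nonneg ht.le hAnonneg]
  have hAzero : (K - K₀) * A = 0 := by
    have hAK : A * (K - K₀)ᴴ = 0 := mul_eq_zero_of_re_trace_conj_eq_zero hA (by
      rw [conjTranspose_conjTranspose]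
      exact (mul_eq_zero.mp hAtrace).resolve_left ht.ne')
    simpa [hA.1.eq] using congrArg conjTranspose hAK
  rw [Matrix.mul_sub, sub_eq_zero] at hBzero
  rw [Matrix.sub_mul, sub_eq_zero] at hAzero
  rw [hBzero, hAzero, hK₀]

lemma diagonal_sylvester [DecidableEq n] {α β : n → ℝ} (hα : ∀ i, 0 ≤ α i) (hβ : ∀ j, 0 ≤ β j)
    (ht : 0 < t) (D : Matrix n n ℂ) :
    let X : Matrix n n ℂ := of fun j i => ((α i / (β j + t * α i) : ℝ) : ℂ) * D j i
    diagonal (fun j => (β j : ℂ)) * X + (t : ℂ) • (X * diagonal (fun i => (α i : ℂ))) =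
      D * diagonal (fun i => (α i : ℂ)) := by
  ext j i
  have hcancel : (β j + t * α i) * (α i / (β j + t * α i)) = α i :=
    mul_div_cancel_of_imp' fun h => by
      have hαt := ((add_eq_zero_iff_of_nonneg (hβ j) (mul_nonneg ht.le (hα i))).mp h).2
      exact (mul_eq_zero.mp hαt).resolve_left ht.ne'
  simp only [Matrix.add_apply, Matrix.smul_apply, diagonal_mul, mul_diagonal, of_apply,
    smul_eq_mul]
  rw [← Complex.ofReal_inj] at hcancel
  push_cast at hcancel ⊢
  linear_combination D j i * hcancel

lemma exists_sylvester_solution_of_diagonalization [DecidableEq n] {U W D : Matrix n n ℂ}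
    {α β : n → ℝ} (hU : star U * U = 1) (hW : star W * W = 1) (hWD : W * D = U)
    (hA : A = U * diagonal (fun i => (α i : ℂ)) * star U)
    (hB : B * W = W * diagonal (fun j => (β j : ℂ)))
    (hα : ∀ i, 0 ≤ α i) (hβ : ∀ j, 0 ≤ β j) (ht : 0 < t) :
    ∃ K₀ : Matrix n n ℂ, B * K₀ + (t : ℂ) • (K₀ * A) = A ∧
      (K₀ᴴ * A).trace.re =
        ∑ p : n × n, Complex.normSq (D p.2 p.1) * α p.1 * (α p.1 / (β p.2 + t * α p.1)) := by
  let X : Matrix n n ℂ := of fun j i => ((α i / (β j + t * α i) : ℝ) : ℂ) * D j i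
  have hKA : W * X * star U * A = W * (X * diagonal (fun i => (α i : ℂ))) * star U := by
    rw [hA, ← Matrix.mul_assoc, ← Matrix.mul_assoc, Matrix.mul_assoc (W * X), hU, Matrix.mul_one,
      Matrix.mul_assoc W X]
  refine ⟨W * X * star U, ?_, ?_⟩
  · calc B * (W * X * star U) + (t : ℂ) • (W * X * star U * A)
        = W * (diagonal (fun j => (β j : ℂ)) * X +
            (t : ℂ) • (X * diagonal (fun i => (α i : ℂ)))) * star U := by
          rw [hKA, Matrix.mul_add, Matrix.add_mul, Matrix.mul_smul, Matrix.smul_mul,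
            ← Matrix.mul_assoc, ← Matrix.mul_assoc, hB, Matrix.mul_assoc W]
      _ = A := by rw [diagonal_sylvester hα hβ ht, ← Matrix.mul_assoc, hWD, hA]
  · have htrace : ((W * X * star U)ᴴ * A).trace =
        (Xᴴ * (D * diagonal (fun i => (α i : ℂ)))).trace := by
      calc ((W * X * star U)ᴴ * A).trace
          = (U * (Xᴴ * (star W * W * D * diagonal (fun i => (α i : ℂ)))) * star U).trace := by
            rw [hA, ← hWD]
            simp only [conjTranspose_mul, star_eq_conjTranspose, conjTranspose_conjTranspose,
              Matrix.mul_assoc]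
        _ = _ := by rw [trace_mul_comm, ← Matrix.mul_assoc, hU, Matrix.one_mul, hW, Matrix.one_mul]
    rw [htrace, Fintype.sum_prod_type]
    simp only [trace, diag_apply, Matrix.mul_apply (M := Xᴴ), mul_diagonal, conjTranspose_apply,
      Complex.re_sum]
    refine Finset.sum_congr rfl fun i _ => Finset.sum_congr rfl fun j _ => ?_
    rw [← Complex.ofReal_re (_ * _)]
    congr 1
    simp only [X, of_apply, star_mul', Complex.star_def, Complex.conj_ofReal, Complex.ofReal_mul,
      Complex.normSq_eq_conj_mul_self]
    ring

theorem exists_sylvester_solution [DecidableEq n] (hA : A.PosSemidef) (hB : B.PosSemidef)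
    (ht : 0 < t) :
    ∃ K₀ : Matrix n n ℂ, B * K₀ + (t : ℂ) • (K₀ * A) = A ∧
      (K₀ᴴ * A).trace.re = ∑ p, eigenOverlap hA.1 hB.1 p * hA.1.eigenvalues p.1 *
        (hA.1.eigenvalues p.1 / (hB.1.eigenvalues p.2 + t * hA.1.eigenvalues p.1)) := by
  refine exists_sylvester_solution_of_diagonalization
    (Unitary.coe_star_mul_self hA.1.eigenvectorUnitary)
    (Unitary.coe_star_mul_self hB.1.eigenvectorUnitary) ?_ ?_ (mul_eigenvectorUnitary hB.1)
    hA.eigenvalues_nonneg hB.eigenvalues_nonneg ht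
  · rw [eigenbasisChange, ← Matrix.mul_assoc,
      Unitary.mul_star_self_of_mem hB.1.eigenvectorUnitary.2, Matrix.one_mul]
  · rw [← cfc_eq_eigenvectorUnitary_mul hA.1 fun x => x, cfc_id' ℝ A hA.1.isSelfAdjoint]

end ResolventForm

section Measurement

/-- Relative entropy `∑ a (log a - log b)` of two weight functions, in nats. -/
def relEntropy {Y : Type*} [Fintype Y] (a b : Y → ℝ) : ℝ :=
  ∑ y, a y * (Real.log (a y) - Real.log (b y))

variable {n Y : Type*} {A B : Matrix n n ℂ} {t : ℝ} (π : n → Y)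

lemma re_diag_nonneg (hA : A.PosSemidef) (i : n) : 0 ≤ (A i i).re :=
  (Complex.nonneg_iff.mp hA.diag_nonneg).1

/-- The diagonal matrix whose entry at `i` depends only on the outcome `π i`. -/
def fibreScalar [DecidableEq n] (k : Y → ℝ) : Matrix n n ℂ :=
  diagonal fun i => (k (π i) : ℂ)

lemma continuous_fibreScalar [DecidableEq n] : Continuous (fibreScalar π) :=
  Continuous.matrix_diagonal (by fun_prop)

lemma conjTranspose_fibreScalar [DecidableEq n] (k : Y → ℝ) :
    (fibreScalar π k)ᴴ = fibreScalar π k := by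
  simp [fibreScalar, diagonal_conjTranspose, Pi.star_def]

variable [Fintype n]

lemma fibreScalar_mul_fibreScalar [DecidableEq n] (k l : Y → ℝ) :
    fibreScalar π k * fibreScalar π l = fibreScalar π fun y => k y * l y := by
  simp [fibreScalar, diagonal_mul_diagonal]

variable [DecidableEq Y]

/-- The weight of outcome `y` when `A` is measured in the computational basis and only the
value of `π` is recorded. -/
def outcomeWeight (A : Matrix n n ℂ) (y : Y) : ℝ :=
  ∑ i with π i = y, (A i i).re

lemma outcomeWeight_fst {κ : Type*} [Fintype Y] [Fintype κ] (M : Matrix (Y × κ) (Y × κ) ℂ)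
    (y : Y) : outcomeWeight Prod.fst M y = ∑ k, (M (y, k) (y, k)).re := by
  simp [outcomeWeight, Finset.sum_filter, Fintype.sum_prod_type_right]

lemma outcomeWeight_nonneg (hA : A.PosSemidef) (y : Y) : 0 ≤ outcomeWeight π A y :=
  Finset.sum_nonneg fun i _ => re_diag_nonneg hA i

lemma mulVec_single_eq_zero_of_outcomeWeight_eq_zero [DecidableEq n] (hA : A.PosSemidef) {i : n}
    (h : outcomeWeight π A (π i) = 0) : A *ᵥ Pi.single i 1 = 0 := by
  have hre : (A i i).re = 0 := (Finset.sum_eq_zero_iff_of_nonneg fun j _ => re_diag_nonneg hA j).mp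
    h i (by simp)
  rw [← hA.dotProduct_mulVec_zero_iff]
  simpa using Complex.ext hre (Complex.nonneg_iff.mp hA.diag_nonneg).2.symm

lemma outcomeWeight_eq_zero_of_ker (hB : B.PosSemidef) (hker : ∀ v, B *ᵥ v = 0 → A *ᵥ v = 0)
    {y : Y} (h : outcomeWeight π B y = 0) : outcomeWeight π A y = 0 := by
  classical
  refine Finset.sum_eq_zero fun i hi => ?_
  obtain rfl := (Finset.mem_filter.mp hi).2
  have hcol := hker _ (mulVec_single_eq_zero_of_outcomeWeight_eq_zero π hB h)
  simpa using congrArg Complex.re (congrFun hcol i)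

variable [Fintype Y]

lemma sum_outcomeWeight_mul (A : Matrix n n ℂ) (k : Y → ℝ) :
    ∑ y, outcomeWeight π A y * k y = ∑ i, (A i i).re * k (π i) := by
  rw [← Finset.sum_fiberwise Finset.univ π]
  refine Finset.sum_congr rfl fun y _ => ?_
  rw [outcomeWeight, Finset.sum_mul]
  exact Finset.sum_congr rfl fun i hi => by rw [(Finset.mem_filter.mp hi).2]

lemma sum_outcomeWeight (A : Matrix n n ℂ) : ∑ y, outcomeWeight π A y = A.trace.re := by
  simpa [trace, Complex.re_sum] using sum_outcomeWeight_mul π A fun _ => 1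

variable [DecidableEq n]

lemma re_trace_fibreScalar_mul (A : Matrix n n ℂ) (k : Y → ℝ) :
    (fibreScalar π k * A).trace.re = ∑ y, outcomeWeight π A y * k y := by
  rw [sum_outcomeWeight_mul]
  simp [trace, fibreScalar, Complex.re_sum, mul_comm]

lemma resolventForm_fibreScalar (k : Y → ℝ) :
    resolventForm A B t (fibreScalar π k) = ∑ y, (2 * outcomeWeight π A y -
      (outcomeWeight π B y + t * outcomeWeight π A y) * k y) * k y := by
  rw [resolventForm, conjTranspose_fibreScalar, trace_mul_cycle _ B, trace_mul_cycle _ A,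
    fibreScalar_mul_fibreScalar]
  simp only [re_trace_fibreScalar_mul, Finset.mul_sum, ← Finset.sum_sub_distrib]
  exact Finset.sum_congr rfl fun y _ => by ring

lemma resolventForm_fibreScalar_div (hA : A.PosSemidef) (hB : B.PosSemidef) (ht : 0 < t) :
    resolventForm A B t (fibreScalar π fun y =>
        outcomeWeight π A y / (outcomeWeight π B y + t * outcomeWeight π A y)) =
      ∑ y, outcomeWeight π A y *
        (outcomeWeight π A y / (outcomeWeight π B y + t * outcomeWeight π A y)) := by
  rw [resolventForm_fibreScalar]
  refine Finset.sum_congr rfl fun y _ => ?_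
  have ha := outcomeWeight_nonneg π hA y
  have hb := outcomeWeight_nonneg π hB y
  rw [mul_div_cancel_of_imp' fun h => ?_]
  · ring
  · have hat := ((add_eq_zero_iff_of_nonneg hb (mul_nonneg ht.le ha)).mp h).2
    exact (mul_eq_zero.mp hat).resolve_left ht.ne'

variable (hA : A.PosSemidef) (hB : B.PosSemidef) (hker : ∀ v, B *ᵥ v = 0 → A *ᵥ v = 0)
include hA hB

lemma sum_outcomeWeight_mul_div_le (ht : 0 < t) :
    ∑ y, outcomeWeight π A y *
        (outcomeWeight π A y / (outcomeWeight π B y + t * outcomeWeight π A y)) ≤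
      ∑ p, eigenOverlap hA.1 hB.1 p * hA.1.eigenvalues p.1 *
        (hA.1.eigenvalues p.1 / (hB.1.eigenvalues p.2 + t * hA.1.eigenvalues p.1)) := by
  obtain ⟨K₀, hK₀, hval⟩ := exists_sylvester_solution hA hB ht
  rw [← hval, ← resolventForm_fibreScalar_div π hA hB ht]
  exact resolventForm_le_of_sylvester hA hB ht hK₀ _

include hker

omit [Fintype Y] [DecidableEq n] in
lemma pos_of_outcomeWeight_ne_zero {y : Y} (hy : outcomeWeight π A y ≠ 0) :
    0 < outcomeWeight π B y ∧ 0 < outcomeWeight π A y :=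
  ⟨(outcomeWeight_nonneg π hB y).lt_of_ne' (mt (outcomeWeight_eq_zero_of_ker π hB hker) hy),
    (outcomeWeight_nonneg π hA y).lt_of_ne' hy⟩

theorem relEntropy_outcomeWeight_le :
    relEntropy (outcomeWeight π A) (outcomeWeight π B) ≤ quantumRelEntropy A B := by
  rw [quantumRelEntropy_eq_sum hA.1 hB.1]
  exact sum_mul_log_sub_log_le
    ((sum_outcomeWeight π A).trans (re_trace_eq_sum_eigenOverlap hA.1 hB.1))
    (fun _ => pos_of_eigenOverlap_mul_ne_zero hA hB hker)
    (fun _ => pos_of_outcomeWeight_ne_zero π hA hB hker)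
    fun _ => sum_outcomeWeight_mul_div_le π hA hB

variable (heq : relEntropy (outcomeWeight π A) (outcomeWeight π B) = quantumRelEntropy A B)
include heq

theorem sylvester_of_relEntropy_eq (ht : 0 < t) :
    let K := fibreScalar π fun y =>
      outcomeWeight π A y / (outcomeWeight π B y + t * outcomeWeight π A y)
    B * K + (t : ℂ) • (K * A) = A := by
  obtain ⟨K₀, hK₀, hval⟩ := exists_sylvester_solution hA hB ht
  refine sylvester_of_resolventForm_eq hA hB ht hK₀ ?_
  rw [resolventForm_fibreScalar_div π hA hB ht, hval]
  rw [quantumRelEntropy_eq_sum hA.1 hB.1] at heq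
  exact sum_mul_div_eq_of_sum_mul_log_sub_log_eq
    ((sum_outcomeWeight π A).trans (re_trace_eq_sum_eigenOverlap hA.1 hB.1))
    (fun _ => pos_of_eigenOverlap_mul_ne_zero hA hB hker)
    (fun _ => pos_of_outcomeWeight_ne_zero π hA hB hker)
    (fun _ => sum_outcomeWeight_mul_div_le π hA hB) heq ht

theorem eq_mul_fibreScalar_of_relEntropy_eq :
    A = B * fibreScalar π fun y => outcomeWeight π A y / outcomeWeight π B y := by
  -- Let `t → 0⁺` in the Sylvester equation `B * K + t • (K * A) = A`.
  let k (t : ℝ) (y : Y) : ℝ :=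
    outcomeWeight π A y / (outcomeWeight π B y + t * outcomeWeight π A y)
  have hk (y : Y) : ContinuousAt (fun t => k t y) 0 := by
    by_cases hy : outcomeWeight π A y = 0
    · simpa [k, hy] using continuousAt_const
    · refine ContinuousAt.div (by fun_prop) (by fun_prop) ?_
      simpa using (pos_of_outcomeWeight_ne_zero π hA hB hker hy).1.ne'
  have hK : ContinuousAt (fun t => fibreScalar π (k t)) 0 :=
    (continuous_fibreScalar π).continuousAt.comp (continuousAt_pi.mpr hk)
  have hlim : ContinuousAt
      (fun t : ℝ => B * fibreScalar π (k t) + (t : ℂ) • (fibreScalar π (k t) * A)) 0 := by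
    fun_prop
  have hconst : (fun t : ℝ => B * fibreScalar π (k t) + (t : ℂ) • (fibreScalar π (k t) * A))
      =ᶠ[nhdsWithin 0 (Set.Ioi 0)] fun _ => A := by
    filter_upwards [self_mem_nhdsWithin] with t ht
    exact sylvester_of_relEntropy_eq π hA hB hker heq ht
  have hA0 := tendsto_nhds_unique tendsto_const_nhds
    ((hlim.tendsto.mono_left nhdsWithin_le_nhds).congr' hconst)
  simpa [k] using hA0

theorem apply_eq_zero_or_div_eq_div_of_relEntropy_eq (p q : n) :
    B p q = 0 ∨ outcomeWeight π A (π p) / outcomeWeight π B (π p) =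
      outcomeWeight π A (π q) / outcomeWeight π B (π q) := by
  let r (y : Y) : ℝ := outcomeWeight π A y / outcomeWeight π B y
  have hAB : A = B * fibreScalar π r := eq_mul_fibreScalar_of_relEntropy_eq π hA hB hker heq
  have hcomm : fibreScalar π r * B = B * fibreScalar π r := by
    rw [← hAB, ← hA.1.eq, hAB, conjTranspose_mul, conjTranspose_fibreScalar, hB.1.eq]
  have hpq := congrFun₂ hcomm p q
  simp only [fibreScalar, diagonal_mul, mul_diagonal] at hpq
  rw [mul_comm, mul_eq_mul_left_iff, Complex.ofReal_inj] at hpq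
  exact hpq.symm

end Measurement

section Ensemble

variable {X n Y : Type*} [Fintype X] [Fintype n] {Γ : X → Matrix n n ℂ}

lemma mulVec_eq_zero_of_sum_mulVec_eq_zero (hΓ : ∀ x, (Γ x).PosSemidef) {v : n → ℂ}
    (hv : (∑ x, Γ x) *ᵥ v = 0) (x : X) : Γ x *ᵥ v = 0 := by
  rw [← (hΓ x).dotProduct_mulVec_zero_iff]
  refine (Finset.sum_eq_zero_iff_of_nonneg fun x _ => (hΓ x).dotProduct_mulVec_nonneg v).mp ?_
    x (Finset.mem_univ x)
  rw [← dotProduct_sum, ← sum_mulVec, hv, dotProduct_zero]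

lemma sum_quantumRelEntropy_sum [DecidableEq n] (hΓ : ∀ x, (Γ x).IsHermitian) :
    ∑ x, quantumRelEntropy (Γ x) (∑ x', Γ x') =
      Real.log 2 * (vonNeumannEntropy (∑ x, Γ x) - ∑ x, vonNeumannEntropy (Γ x)) := by
  have hsum : (∑ x, Γ x).IsHermitian := isSelfAdjoint_sum _ fun x _ => hΓ x
  have hlog : Real.log 2 ≠ 0 := by positivity
  simp only [quantumRelEntropy, Matrix.mul_sub, trace_sub, Complex.sub_re,
    Finset.sum_sub_distrib, vonNeumannEntropy_eq_re_trace hsum,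
    vonNeumannEntropy_eq_re_trace (hΓ _), ← Complex.re_sum, ← trace_sum, ← Finset.sum_mul,
    ← Finset.sum_div, Finset.sum_neg_distrib]
  field_simp
  ring

variable [Fintype Y]

lemma sum_relEntropy_sum (a : X → Y → ℝ) :
    ∑ x, relEntropy (a x) (∑ x', a x') =
      Real.log 2 * (shannonEntropy (∑ x, a x) - ∑ x, shannonEntropy (a x)) := by
  have hlog : Real.log 2 ≠ 0 := by positivity
  simp only [relEntropy, mul_sub, Finset.sum_sub_distrib, shannonEntropy_eq, ← Finset.sum_div,
    Finset.sum_neg_distrib, Finset.sum_apply, Finset.sum_mul]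
  rw [Finset.sum_comm (f := fun x y => a x y * Real.log (∑ x', a x' y))]
  field_simp
  ring

variable [DecidableEq Y] (π : n → Y)

omit [Fintype Y] in
lemma outcomeWeight_sum (Γ : X → Matrix n n ℂ) :
    outcomeWeight π (∑ x, Γ x) = ∑ x, outcomeWeight π (Γ x) := by
  ext y
  simp only [outcomeWeight, Finset.sum_apply, Matrix.sum_apply, Complex.re_sum]
  exact Finset.sum_comm

theorem relEntropy_outcomeWeight_eq_of_entropy_eq [DecidableEq n] (hΓ : ∀ x, (Γ x).PosSemidef)
    (hent : vonNeumannEntropy (∑ x, Γ x) - ∑ x, vonNeumannEntropy (Γ x) =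
      shannonEntropy (outcomeWeight π (∑ x, Γ x)) - ∑ x, shannonEntropy (outcomeWeight π (Γ x)))
    (x : X) :
    relEntropy (outcomeWeight π (Γ x)) (outcomeWeight π (∑ x', Γ x')) =
      quantumRelEntropy (Γ x) (∑ x', Γ x') := by
  have hB : (∑ x, Γ x).PosSemidef := posSemidef_sum _ fun x _ => hΓ x
  refine (Finset.sum_eq_sum_iff_of_le fun x _ => relEntropy_outcomeWeight_le π (hΓ x) hB
    fun v hv => mulVec_eq_zero_of_sum_mulVec_eq_zero hΓ hv x).mp ?_ x (Finset.mem_univ x)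
  rw [sum_quantumRelEntropy_sum fun x => (hΓ x).1, hent, outcomeWeight_sum, sum_relEntropy_sum]

end Ensemble

lemma exists_isDensityMatrix_smul_eq {n : Type*} [Fintype n] [DecidableEq n] [Nonempty n]
    {S : Matrix n n ℂ} (hS : S.PosSemidef) :
    ∃ σ, IsDensityMatrix σ ∧ S = (S.trace.re : ℂ) • σ := by
  have htrace : (S.trace.re : ℂ) = S.trace :=
    Complex.ext rfl (Complex.nonneg_iff.mp hS.trace_nonneg).2
  rw [htrace]
  by_cases h : S.trace = 0
  · refine ⟨diagonal (Pi.single (Classical.arbitrary n) 1), ⟨?_, by simp⟩, ?_⟩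
    · exact PosSemidef.diagonal (Pi.single_nonneg.mpr zero_le_one)
    · rw [h, zero_smul, hS.trace_eq_zero_iff.mp h]
  · refine ⟨S.trace⁻¹ • S, ⟨hS.smul (inv_nonneg.mpr hS.trace_nonneg), ?_⟩, ?_⟩
    · rw [trace_smul, smul_eq_mul, inv_mul_cancel₀ h]
    · rw [smul_inv_smul₀ h]

section DependentPart

open scoped Kronecker

variable {Y F N κ : Type*}

/-- A family of unit vectors `ν y` that are orthogonal to each other within every fibre of `f`;
equivalently, `|y⟩ ↦ |f y⟩ ⊗ |ν y⟩` is an isometry. -/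
structure IsFibrewiseOrthonormal [Fintype N] (f : Y → F) (ν : Y → N → ℂ) : Prop where
  norm_sq_eq_one (y : Y) : ∑ i, ‖ν y i‖ ^ 2 = 1
  orthogonal (y y' : Y) (hne : y ≠ y') (hf : f y = f y') :
    ∑ i, (starRingEnd ℂ) (ν y i) * ν y' i = 0

lemma isFibrewiseOrthonormal_single [Fintype N] [DecidableEq N] (e : Y ≃ N) (f : Y → F) :
    IsFibrewiseOrthonormal f fun y => Pi.single (e y) (1 : ℂ) where
  norm_sq_eq_one y := by simp [Pi.single_apply, apply_ite (fun z : ℂ => ‖z‖ ^ 2)]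
  orthogonal y y' hne _ := by simp [Pi.single_apply, e.injective.eq_iff, hne.symm]

variable [DecidableEq F]

/-- The operator `⟨v| V`, where `V` is the map `|y⟩ ↦ |f y⟩ ⊗ |ν y⟩`. -/
def fibreMap (f : Y → F) (ν : Y → N → ℂ) (v : F) : Matrix N Y ℂ :=
  of fun i y => if f y = v then ν y i else 0

lemma conjTranspose_fibreMap_mul_self [Fintype N] [DecidableEq Y] {f : Y → F} {ν : Y → N → ℂ}
    (hν : IsFibrewiseOrthonormal f ν) (v : F) :
    (fibreMap f ν v)ᴴ * fibreMap f ν v = diagonal fun y => if f y = v then 1 else 0 := by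
  ext y y'
  rcases eq_or_ne y y' with rfl | hne
  · by_cases hy : f y = v
    · simpa [Matrix.mul_apply, fibreMap, hy, Complex.conj_mul'] using
        congrArg ((↑) : ℝ → ℂ) (hν.norm_sq_eq_one y)
    · simp [Matrix.mul_apply, fibreMap, hy]
  · rw [diagonal_apply_ne _ hne]
    by_cases hy : f y = v
    · by_cases hy' : f y' = v
      · simpa [Matrix.mul_apply, fibreMap, hy, hy'] using
          hν.orthogonal y y' hne (hy.trans hy'.symm)
      · simp [Matrix.mul_apply, fibreMap, hy']
    · simp [Matrix.mul_apply, fibreMap, hy]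

variable [Fintype Y] [Fintype κ] [DecidableEq κ]

/-- The block `⟨v| (V ⊗ 1) M (V ⊗ 1)* |w⟩` of the conjugate of `M` by the map
`V : |y⟩ ↦ |f y⟩ ⊗ |ν y⟩`. -/
def fibreBlock (f : Y → F) (ν : Y → N → ℂ) (M : Matrix (Y × κ) (Y × κ) ℂ) (v w : F) :
    Matrix (N × κ) (N × κ) ℂ :=
  (fibreMap f ν v ⊗ₖ (1 : Matrix κ κ ℂ)) * M * (fibreMap f ν w ⊗ₖ (1 : Matrix κ κ ℂ))ᴴ

variable {f : Y → F} {ν : Y → N → ℂ} {M : Matrix (Y × κ) (Y × κ) ℂ} {v w : F}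

lemma fibreBlock_apply (p q : N × κ) :
    fibreBlock f ν M v w p q = ∑ y with f y = v, ∑ y' with f y' = w,
      ν y p.1 * (starRingEnd ℂ) (ν y' q.1) * M (y, p.2) (y', q.2) := by
  calc fibreBlock f ν M v w p q
      = ∑ y', (∑ y, fibreMap f ν v p.1 y * M (y, p.2) (y', q.2)) *
          star (fibreMap f ν w q.1 y') := by
        simp [fibreBlock, Matrix.mul_apply, one_apply, Fintype.sum_prod_type,
          apply_ite (starRingEnd ℂ)]
    _ = _ := by
        rw [Finset.sum_comm]
        simp [fibreMap, Finset.sum_filter, apply_ite (starRingEnd ℂ), Finset.sum_mul,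
          mul_right_comm]

lemma sum_eq_ite_of_fibreBlock_eq {s : F → Prop} {v w : Subtype s} {c : ℂ}
    {σ : Matrix (N × κ) (N × κ) ℂ}
    (h : fibreBlock f ν M v w = if (v : F) = w then c • σ else 0) (p q : N × κ) :
    (∑ y with f y = v, ∑ y' with f y' = w,
      ν y p.1 * (starRingEnd ℂ) (ν y' q.1) * M (y, p.2) (y', q.2)) =
        if v = w then c * σ p q else 0 := by
  rw [← fibreBlock_apply, h]
  simp only [Subtype.ext_iff]
  split_ifs <;> rfl

lemma fibreBlock_eq_zero (hM : ∀ p q, f p.1 = v → f q.1 = w → M p q = 0) :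
    fibreBlock f ν M v w = 0 := by
  ext p q
  rw [fibreBlock_apply]
  refine Finset.sum_eq_zero fun y hy => Finset.sum_eq_zero fun y' hy' => ?_
  rw [hM _ _ (Finset.mem_filter.mp hy).2 (Finset.mem_filter.mp hy').2, mul_zero]

lemma fibreBlock_mul_fibreScalar [DecidableEq Y] {k : Y → ℝ} {c : ℝ}
    (hk : ∀ y, f y = w → k y = c) :
    fibreBlock f ν (M * fibreScalar Prod.fst k) v w = (c : ℂ) • fibreBlock f ν M v w := by
  ext p q
  simp only [Matrix.smul_apply, fibreBlock_apply, smul_eq_mul, Finset.mul_sum, fibreScalar,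
    mul_diagonal]
  refine Finset.sum_congr rfl fun y _ => Finset.sum_congr rfl fun y' hy' => ?_
  rw [hk y' (Finset.mem_filter.mp hy').2]
  ring

lemma posSemidef_fibreBlock [Finite N] (hM : M.PosSemidef) : (fibreBlock f ν M v v).PosSemidef :=
  hM.mul_mul_conjTranspose_same _

lemma re_trace_fibreBlock [Fintype N] [DecidableEq Y] (hν : IsFibrewiseOrthonormal f ν) :
    (fibreBlock f ν M v v).trace.re = ∑ y with f y = v, outcomeWeight Prod.fst M y := by
  have hproj : (fibreMap f ν v ⊗ₖ (1 : Matrix κ κ ℂ))ᴴ * (fibreMap f ν v ⊗ₖ (1 : Matrix κ κ ℂ)) =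
      fibreScalar Prod.fst fun y => if f y = v then 1 else 0 := by
    rw [conjTranspose_kronecker, ← mul_kronecker_mul, conjTranspose_fibreMap_mul_self hν,
      conjTranspose_one, Matrix.one_mul, ← diagonal_one, diagonal_kronecker_diagonal]
    simp [fibreScalar, apply_ite ((↑) : ℝ → ℂ)]
  rw [fibreBlock, trace_mul_cycle, hproj, re_trace_fibreScalar_mul]
  simp [Finset.sum_filter]

end DependentPart

section HolevoEquality

variable {X Y κ N : Type*} [Fintype X] [Fintype Y] [Fintype κ] [DecidableEq Y] {P : X × Y → ℝ}
  {Γ : X → Matrix (Y × κ) (Y × κ) ℂ} (hΓ : ∀ x, (Γ x).PosSemidef)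
  (hΓP : ∀ x y, outcomeWeight Prod.fst (Γ x) y = P (x, y))

include hΓP

lemma outcomeWeight_sum_eq_margY :
    outcomeWeight Prod.fst (∑ x, Γ x) = margY P := by
  ext y
  rw [outcomeWeight_sum, Finset.sum_apply]
  exact Finset.sum_congr rfl fun x _ => hΓP x y

lemma nonempty_prod_of_sum_eq_one [Fintype N] {F : Type*} {f : Y → F} {ν : Y → N → ℂ}
    (hP1 : ∑ p, P p = 1) (hν : IsFibrewiseOrthonormal f ν) : Nonempty (N × κ) := by
  obtain ⟨⟨x, y⟩, -, hxy⟩ := Finset.exists_ne_zero_of_sum_ne_zero (hP1.trans_ne one_ne_zero)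
  rw [← hΓP, outcomeWeight] at hxy
  obtain ⟨i, -, -⟩ := Finset.exists_ne_zero_of_sum_ne_zero hxy
  have hνy := (hν.norm_sq_eq_one y).trans_ne one_ne_zero
  obtain ⟨j, -, -⟩ := Finset.exists_ne_zero_of_sum_ne_zero hνy
  exact ⟨(j, i.2)⟩

include hΓ

lemma condXY_mul_margY (x : X) (y : Y) : condXY P y x * margY P y = P (x, y) := by
  refine div_mul_cancel_of_imp fun h => ?_
  have hP (x' : X) : 0 ≤ P (x', y) := hΓP x' y ▸ outcomeWeight_nonneg _ (hΓ x') y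
  exact (Finset.sum_eq_zero_iff_of_nonneg fun x' _ => hP x').mp h x (Finset.mem_univ x)

variable [DecidableEq κ]
  (hent : vonNeumannEntropy (∑ x, Γ x) - ∑ x, vonNeumannEntropy (Γ x) =
    shannonEntropy (margY P) - shannonEntropy P)
include hent

theorem relEntropy_eq_of_holevo_eq (x : X) :
    relEntropy (outcomeWeight Prod.fst (Γ x)) (outcomeWeight Prod.fst (∑ x', Γ x')) =
      quantumRelEntropy (Γ x) (∑ x', Γ x') := by
  refine relEntropy_outcomeWeight_eq_of_entropy_eq Prod.fst hΓ ?_ x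
  have hrow (x : X) : outcomeWeight Prod.fst (Γ x) = fun y => P (x, y) := funext (hΓP x)
  simp only [hent, outcomeWeight_sum_eq_margY hΓP, hrow, shannonEntropy,
    Fintype.sum_prod_type, Finset.sum_neg_distrib]

theorem eq_sum_mul_fibreScalar_condXY (x : X) :
    Γ x = (∑ x', Γ x') * fibreScalar Prod.fst fun y => condXY P y x := by
  have hB : (∑ x, Γ x).PosSemidef := posSemidef_sum _ fun x _ => hΓ x
  have h := eq_mul_fibreScalar_of_relEntropy_eq Prod.fst (hΓ x) hB
    (fun _ hv => mulVec_eq_zero_of_sum_mulVec_eq_zero hΓ hv x)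
    (relEntropy_eq_of_holevo_eq hΓ hΓP hent x)
  simpa only [condXY, outcomeWeight_sum_eq_margY hΓP, hΓP] using h

theorem sum_apply_eq_zero_of_condXY_ne {p q : Y × κ} (h : condXY P p.1 ≠ condXY P q.1) :
    (∑ x, Γ x) p q = 0 := by
  have hB : (∑ x, Γ x).PosSemidef := posSemidef_sum _ fun x _ => hΓ x
  contrapose! h
  funext x
  have hx := (apply_eq_zero_or_div_eq_div_of_relEntropy_eq Prod.fst (hΓ x) hB
    (fun _ hv => mulVec_eq_zero_of_sum_mulVec_eq_zero hΓ hv x)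
    (relEntropy_eq_of_holevo_eq hΓ hΓP hent x) p q).resolve_left h
  simpa only [condXY, outcomeWeight_sum_eq_margY hΓP, hΓP] using hx

variable {ν : Y → N → ℂ}

theorem exists_isDensityMatrix_fibreBlock_eq [Fintype N] [DecidableEq N]
    (hP1 : ∑ p, P p = 1) (hν : IsFibrewiseOrthonormal (condXY P) ν) :
    ∃ σ : (X → ℝ) → Matrix (N × κ) (N × κ) ℂ, (∀ v, IsDensityMatrix (σ v)) ∧
      ∀ x v w, fibreBlock (condXY P) ν (Γ x) v w =
        if v = w then ((∑ y with condXY P y = v, P (x, y) : ℝ) : ℂ) • σ v else 0 := by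
  have hB : (∑ x, Γ x).PosSemidef := posSemidef_sum _ fun x _ => hΓ x
  have := nonempty_prod_of_sum_eq_one hΓP hP1 hν
  choose σ hσ hBσ using fun v => exists_isDensityMatrix_smul_eq
    (posSemidef_fibreBlock (f := condXY P) (ν := ν) (v := v) hB)
  refine ⟨σ, hσ, fun x v w => ?_⟩
  rw [eq_sum_mul_fibreScalar_condXY hΓ hΓP hent x,
    fibreBlock_mul_fibreScalar fun y (hy : condXY P y = w) => congrFun hy x]
  split_ifs with hvw
  · subst hvw
    rw [hBσ v, re_trace_fibreBlock hν, smul_smul, ← Complex.ofReal_mul, Finset.mul_sum,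
      outcomeWeight_sum_eq_margY hΓP]
    congr 2
    refine Finset.sum_congr rfl fun y hy => ?_
    rw [← (Finset.mem_filter.mp hy).2, condXY_mul_margY hΓ hΓP]
  · rw [fibreBlock_eq_zero fun p q hp hq => ?_, smul_zero]
    exact sum_apply_eq_zero_of_condXY_ne hΓ hΓP hent (by rwa [hp, hq])

end HolevoEquality

section Tripartite

variable {X Y : Type*} {dE dA dB : ℕ} {P : X × Y → ℝ}
  {ψ : Fin dE × X × Y × Fin dA × Fin dB → ℂ}

/-- The unnormalised state of the registers `B B'` on obtaining outcome `x` when `A` is measured;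
its trace is the probability of `x`. -/
def condStateBB (ψ : Fin dE × X × Y × Fin dA × Fin dB → ℂ) (x : X) :
    Matrix (Y × Fin dB) (Y × Fin dB) ℂ := fun p q =>
  ∑ e, ∑ a, ψ (e, x, p.1, a, p.2) * (starRingEnd ℂ) (ψ (e, x, q.1, a, q.2))

/-- The unnormalised state of the registers `A A'` on obtaining outcome `y` when `B` is measured;
its trace is the probability of `y`. -/
def condStateAA (ψ : Fin dE × X × Y × Fin dA × Fin dB → ℂ) (y : Y) :
    Matrix (X × Fin dA) (X × Fin dA) ℂ := fun p q =>
  ∑ e, ∑ b, ψ (e, p.1, y, p.2, b) * (starRingEnd ℂ) (ψ (e, q.1, y, q.2, b))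

lemma posSemidef_condStateBB [Finite Y] (x : X) : (condStateBB ψ x).PosSemidef := by
  let φ (e : Fin dE) (a : Fin dA) (p : Y × Fin dB) : ℂ := ψ (e, x, p.1, a, p.2)
  have h : condStateBB ψ x = ∑ e, ∑ a, vecMulVec (φ e a) (star (φ e a)) := by
    ext p q
    simp [condStateBB, φ, Matrix.sum_apply, vecMulVec_apply]
  rw [h]
  exact posSemidef_sum _ fun e _ => posSemidef_sum _ fun a _ => posSemidef_vecMulVec_self_star _

lemma triBB_eq_sum_condStateBB [Fintype X] : triBB ψ = ∑ x, condStateBB ψ x := by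
  ext p q
  rw [Matrix.sum_apply]
  exact Finset.sum_comm

variable [Fintype Y]

lemma outcomeWeight_condStateBB [DecidableEq Y] (x : X) (y : Y) :
    outcomeWeight Prod.fst (condStateBB ψ x) y = ∑ e, ∑ a, ∑ b, ‖ψ (e, x, y, a, b)‖ ^ 2 := by
  have hdiag (b : Fin dB) : (condStateBB ψ x (y, b) (y, b)).re =
      ∑ e, ∑ a, ‖ψ (e, x, y, a, b)‖ ^ 2 := by
    simp only [condStateBB, Complex.re_sum, Complex.mul_conj, Complex.ofReal_re,
      Complex.normSq_eq_norm_sq]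
  simp only [outcomeWeight_fst, hdiag]
  rw [Finset.sum_comm]
  exact Finset.sum_congr rfl fun e _ => Finset.sum_comm

variable [Fintype X]

lemma mutualInfo_comp_swap (P : X × Y → ℝ) : mutualInfo (P ∘ Prod.swap) = mutualInfo P := by
  rw [mutualInfo, mutualInfo, ← shannonEntropy_comp_equiv (Equiv.prodComm Y X) P,
    add_comm (shannonEntropy (margX P))]
  rfl

variable [DecidableEq X] [DecidableEq Y]

lemma entropy_condStateBB_of_nonleaking (h : StriXBB P ψ = mutualInfo P) :
    vonNeumannEntropy (∑ x, condStateBB ψ x) - ∑ x, vonNeumannEntropy (condStateBB ψ x) =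
      shannonEntropy (margY P) - shannonEntropy P := by
  have htri : vonNeumannEntropy (triXBB ψ) = ∑ x, vonNeumannEntropy (condStateBB ψ x) :=
    vonNeumannEntropy_blockDiagonal fun x => (posSemidef_condStateBB x).isHermitian
  rw [StriXBB, mutualInfo, htri, triBB_eq_sum_condStateBB] at h
  linarith

theorem exists_isDensityMatrix_fibreBlock_condStateBB_eq {N : Type*} [Fintype N] [DecidableEq N]
    {ν : Y → N → ℂ} (hν : IsFibrewiseOrthonormal (condXY P) ν) (hP1 : ∑ p, P p = 1)
    (hprob : ∀ x y, ∑ e, ∑ a, ∑ b, ‖ψ (e, x, y, a, b)‖ ^ 2 = P (x, y))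
    (h : StriXBB P ψ = mutualInfo P) :
    ∃ σ : (X → ℝ) → Matrix (N × Fin dB) (N × Fin dB) ℂ, (∀ v, IsDensityMatrix (σ v)) ∧
      ∀ x v w, fibreBlock (condXY P) ν (condStateBB ψ x) v w =
        if v = w then ((∑ y with condXY P y = v, P (x, y) : ℝ) : ℂ) • σ v else 0 :=
  exists_isDensityMatrix_fibreBlock_eq posSemidef_condStateBB
    (fun x y => (outcomeWeight_condStateBB x y).trans (hprob x y))
    (entropy_condStateBB_of_nonleaking h) hP1 hν

theorem exists_isDensityMatrix_fibreBlock_condStateAA_eq {M : Type*} [Fintype M] [DecidableEq M]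
    {μ : X → M → ℂ} (hμ : IsFibrewiseOrthonormal (condYX P) μ) (hP1 : ∑ p, P p = 1)
    (hprob : ∀ x y, ∑ e, ∑ a, ∑ b, ‖ψ (e, x, y, a, b)‖ ^ 2 = P (x, y))
    (h : StriAAY P ψ = mutualInfo P) :
    ∃ τ : (Y → ℝ) → Matrix (M × Fin dA) (M × Fin dA) ℂ, (∀ u, IsDensityMatrix (τ u)) ∧
      ∀ y u w, fibreBlock (condYX P) μ (condStateAA ψ y) u w =
        if u = w then ((∑ x with condYX P x = u, P (x, y) : ℝ) : ℂ) • τ u else 0 := by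
  let ψ' : Fin dE × Y × X × Fin dB × Fin dA → ℂ := fun s =>
    ψ (s.1, s.2.2.1, s.2.1, s.2.2.2.2, s.2.2.2.1)
  have hentropy : StriXBB (P ∘ Prod.swap) ψ' = mutualInfo (P ∘ Prod.swap) := by
    rw [mutualInfo_comp_swap, ← h, StriAAY, add_comm]
    rfl
  refine exists_isDensityMatrix_fibreBlock_condStateBB_eq (P := P ∘ Prod.swap) (ψ := ψ') hμ
    ((Equiv.sum_comp (Equiv.prodComm Y X) P).trans hP1) (fun y x => ?_) hentropy
  rw [Function.comp_apply, Prod.swap_prod_mk, ← hprob x y]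
  exact Finset.sum_congr rfl fun e _ => Finset.sum_comm

theorem nonleaking_tripartite_embedding_structure_general {M N : Type*} [Fintype M] [DecidableEq M]
    [Fintype N] [DecidableEq N] (P : X × Y → ℝ) (hP1 : ∑ p, P p = 1)
    (ψ : Fin dE × X × Y × Fin dA × Fin dB → ℂ)
    (hprob : ∀ x y, ∑ e, ∑ a, ∑ b, ‖ψ (e, x, y, a, b)‖ ^ 2 = P (x, y))
    (hnl1 : StriXBB P ψ = mutualInfo P) (hnl2 : StriAAY P ψ = mutualInfo P)
    {μ : X → M → ℂ} (hμ : IsFibrewiseOrthonormal (condYX P) μ)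
    {ν : Y → N → ℂ} (hν : IsFibrewiseOrthonormal (condXY P) ν) :
    ∃ (σ : (X → ℝ) → Matrix (N × Fin dB) (N × Fin dB) ℂ)
      (τ : (Y → ℝ) → Matrix (M × Fin dA) (M × Fin dA) ℂ),
      (∀ v, IsDensityMatrix (σ v)) ∧ (∀ u, IsDensityMatrix (τ u)) ∧
      (∀ x v w, fibreBlock (condXY P) ν (condStateBB ψ x) v w =
        if v = w then ((∑ y with condXY P y = v, P (x, y) : ℝ) : ℂ) • σ v else 0) ∧
      (∀ y u w, fibreBlock (condYX P) μ (condStateAA ψ y) u w =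
        if u = w then ((∑ x with condYX P x = u, P (x, y) : ℝ) : ℂ) • τ u else 0) := by
  obtain ⟨σ, hσ, hσψ⟩ := exists_isDensityMatrix_fibreBlock_condStateBB_eq hν hP1 hprob hnl1
  obtain ⟨τ, hτ, hτψ⟩ := exists_isDensityMatrix_fibreBlock_condStateAA_eq hμ hP1 hprob hnl2
  exact ⟨σ, τ, hσ, hτ, hσψ, hτψ⟩

end Tripartite

/-- for a non-leaking tripartite embedding `ψ` of `P`, there exist
isometries `U : |x⟩ ↦ |f_X(x)⟩|μ_x⟩` and `V : |y⟩ ↦ |f_Y(y)⟩|ν_y⟩` (i.e. unit vectors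
`μ_x`, mutually orthogonal within each fibre of `f_X`, and similarly `ν_y`) such that
after measuring `A` (yielding `X`), tracing out `E` and `A'` and applying `V` to `B`,
the resulting state equals `Σ_{x,ỹ} P_{X,Y↘X}(x,ỹ) |x⟩⟨x| ⊗ |ỹ⟩⟨ỹ| ⊗ σ^{ỹ}` with the
density matrices `σ^{ỹ}` depending only on `ỹ`, and symmetrically with the roles of
the two parties exchanged. -/
theorem nonleaking_tripartite_embedding_structure {dE dA dB : ℕ}
    (P : 𝒳 × 𝒴 → ℝ) (hP0 : ∀ p, 0 ≤ P p) (hP1 : ∑ p, P p = 1)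
    (ψ : Fin dE × 𝒳 × 𝒴 × Fin dA × Fin dB → ℂ)
    (hprob : ∀ x y, ∑ e, ∑ a, ∑ b, ‖ψ (e, x, y, a, b)‖ ^ 2 = P (x, y))
    (hcorr1 : StriXYBp P ψ = mutualInfo P)
    (hcorr2 : StriXApY P ψ = mutualInfo P)
    (hnl1 : StriXBB P ψ = mutualInfo P)
    (hnl2 : StriAAY P ψ = mutualInfo P) :
    ∃ (m n : ℕ) (μ : 𝒳 → Fin m → ℂ) (ν : 𝒴 → Fin n → ℂ)
      (σ : {v // v ∈ Finset.univ.image (condXY P)} →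
        Matrix (Fin n × Fin dB) (Fin n × Fin dB) ℂ)
      (τ : {u // u ∈ Finset.univ.image (condYX P)} →
        Matrix (Fin m × Fin dA) (Fin m × Fin dA) ℂ),
      (∀ x, ∑ i, ‖μ x i‖ ^ 2 = 1) ∧
      (∀ x x', x ≠ x' → condYX P x = condYX P x' →
        ∑ i, (starRingEnd ℂ) (μ x i) * μ x' i = 0) ∧
      (∀ y, ∑ i, ‖ν y i‖ ^ 2 = 1) ∧
      (∀ y y', y ≠ y' → condXY P y = condXY P y' →
        ∑ i, (starRingEnd ℂ) (ν y i) * ν y' i = 0) ∧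
      (∀ q, IsDensityMatrix (σ q)) ∧
      (∀ q, IsDensityMatrix (τ q)) ∧
      (∀ x : 𝒳, ∀ p q : {v // v ∈ Finset.univ.image (condXY P)} × Fin n × Fin dB,
        (∑ y ∈ Finset.univ.filter fun y => condXY P y = p.1.1,
          ∑ y' ∈ Finset.univ.filter fun y' => condXY P y' = q.1.1,
            ν y p.2.1 * (starRingEnd ℂ) (ν y' q.2.1) *
              (∑ e, ∑ a, ψ (e, x, y, a, p.2.2) * (starRingEnd ℂ) (ψ (e, x, y', a, q.2.2)))) =
        if p.1 = q.1 then
          ((∑ y ∈ Finset.univ.filter fun y => condXY P y = p.1.1, P (x, y) : ℝ) : ℂ) *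
            σ p.1 (p.2.1, p.2.2) (q.2.1, q.2.2)
        else 0) ∧
      (∀ y : 𝒴, ∀ p q : {u // u ∈ Finset.univ.image (condYX P)} × Fin m × Fin dA,
        (∑ x ∈ Finset.univ.filter fun x => condYX P x = p.1.1,
          ∑ x' ∈ Finset.univ.filter fun x' => condYX P x' = q.1.1,
            μ x p.2.1 * (starRingEnd ℂ) (μ x' q.2.1) *
              (∑ e, ∑ b, ψ (e, x, y, p.2.2, b) * (starRingEnd ℂ) (ψ (e, x', y, q.2.2, b)))) =
        if p.1 = q.1 then
          ((∑ x ∈ Finset.univ.filter fun x => condYX P x = p.1.1, P (x, y) : ℝ) : ℂ) *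
            τ p.1 (p.2.1, p.2.2) (q.2.1, q.2.2)
        else 0) := by
  have hμ := isFibrewiseOrthonormal_single (Fintype.equivFin 𝒳) (condYX P)
  have hν := isFibrewiseOrthonormal_single (Fintype.equivFin 𝒴) (condXY P)
  obtain ⟨σ, τ, hσ, hτ, hσψ, hτψ⟩ :=
    nonleaking_tripartite_embedding_structure_general P hP1 ψ hprob hnl1 hnl2 hμ hν
  exact ⟨_, _, _, _, fun q => σ q, fun q => τ q, hμ.1, hμ.2, hν.1, hν.2,
    fun q => hσ q, fun q => hτ q,
    fun x p q => sum_eq_ite_of_fibreBlock_eq (hσψ x p.1 q.1) p.2 q.2,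
    fun y p q => sum_eq_ite_of_fibreBlock_eq (hτψ y p.1 q.1) p.2 q.2⟩

end
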